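/- arXiv:2408.13125 — 2 statements merged into one kernel-verified Lean document; each statement's English description precedes it below -/
import Mathlib

section
/- Let u = sin(π/7), d = sin(2π/7), t = sin(3π/7), and set x₁ = t/d, x₂ = −u/t, x₃ = −d/u. Then each of x₁, x₂, x₃ is a root of the cubic X³ + X² − 2X − 1 = 0, and moreover x₁·x₂·x₃ = 1 and x₁ + x₂ + x₃ = −1. -/
open Real

/-!
Ptolemy's theorem for inscribed quadrilaterals on the vertices of the heptagon gives
`d * t = u * d + u * t` and `t ^ 2 = u * d + d ^ 2`. After clearing denominators, these two
quadratic relations determine the elementary symmetric functions of `t / d`, `-u / t`, `-d / u`,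
namely `-1`, `-2`, `1`, and Vieta's formulas turn them into the cubic.
-/

theorem cube_add_sq_sub_two_mul_sub_one_eq_mul {R : Type*} [CommRing R] {a b c : R}
    (hsum : a + b + c = -1) (hpairs : a * b + a * c + b * c = -2) (hprod : a * b * c = 1) (x : R) :
    x ^ 3 + x ^ 2 - 2 * x - 1 = (x - a) * (x - b) * (x - c) := by
  linear_combination x ^ 2 * hsum - x * hpairs + hprod

/-- The relations between the side `u`, the shorter diagonal `d` and the longer diagonal `t` of a
regular heptagon that Ptolemy's theorem gives for the inscribed quadrilaterals whose consecutive
sides are `u, u, d, t` and `u, d, d, d`. The elements are not required to be nonzero. -/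
structure IsHeptagonTriple {R : Type*} [Semiring R] (u d t : R) : Prop where
  d_mul_t : d * t = u * d + u * t
  t_sq : t ^ 2 = u * d + d ^ 2

namespace IsHeptagonTriple

section NoZeroDivisors

variable {R : Type*} [Semiring R] [NoZeroDivisors R] {u d t : R}

theorem t_ne_zero (h : IsHeptagonTriple u d t) (hd : d ≠ 0) : t ≠ 0 := by
  rintro rfl
  have hud : u * d = 0 := by simpa using h.d_mul_t.symm
  have hd_sq : d ^ 2 = 0 := by simpa [hud] using h.t_sq.symm
  exact hd (pow_eq_zero_iff two_ne_zero |>.mp hd_sq)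

theorem u_ne_zero (h : IsHeptagonTriple u d t) (hd : d ≠ 0) : u ≠ 0 := by
  rintro rfl
  have hdt : d * t = 0 := by simpa using h.d_mul_t
  exact mul_ne_zero hd (h.t_ne_zero hd) hdt

end NoZeroDivisors

variable {K : Type*} [Field K] {u d t : K}

theorem sum_ratios (h : IsHeptagonTriple u d t) (hd : d ≠ 0) :
    t / d + -u / t + -d / u = -1 := by
  have hu := h.u_ne_zero hd
  have ht := h.t_ne_zero hd
  field_simp
  linear_combination u * h.t_sq - d * h.d_mul_t

theorem sum_ratio_pairs (h : IsHeptagonTriple u d t) (hd : d ≠ 0) :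
    t / d * (-u / t) + t / d * (-d / u) + -u / t * (-d / u) = -2 := by
  have hu := h.u_ne_zero hd
  have ht := h.t_ne_zero hd
  field_simp
  linear_combination (u - t) * h.d_mul_t - u * h.t_sq

theorem prod_ratios (h : IsHeptagonTriple u d t) (hd : d ≠ 0) :
    t / d * (-u / t) * (-d / u) = 1 := by
  have hu := h.u_ne_zero hd
  have ht := h.t_ne_zero hd
  field_simp

end IsHeptagonTriple

theorem heptagon_ratios_cubic_general {K : Type*} [Field K] {u d t x₁ x₂ x₃ : K}
    (h : IsHeptagonTriple u d t) (hd : d ≠ 0)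
    (hx₁ : x₁ = t / d) (hx₂ : x₂ = -u / t) (hx₃ : x₃ = -d / u) :
    x₁ ^ 3 + x₁ ^ 2 - 2 * x₁ - 1 = 0 ∧
    x₂ ^ 3 + x₂ ^ 2 - 2 * x₂ - 1 = 0 ∧
    x₃ ^ 3 + x₃ ^ 2 - 2 * x₃ - 1 = 0 ∧
    x₁ * x₂ * x₃ = 1 ∧
    x₁ + x₂ + x₃ = -1 := by
  have hsum : x₁ + x₂ + x₃ = -1 := by simpa only [hx₁, hx₂, hx₃] using h.sum_ratios hd
  have hpairs : x₁ * x₂ + x₁ * x₃ + x₂ * x₃ = -2 := by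
    simpa only [hx₁, hx₂, hx₃] using h.sum_ratio_pairs hd
  have hprod : x₁ * x₂ * x₃ = 1 := by simpa only [hx₁, hx₂, hx₃] using h.prod_ratios hd
  have factor := cube_add_sq_sub_two_mul_sub_one_eq_mul hsum hpairs hprod
  exact ⟨by simp [factor], by simp [factor], by simp [factor], hprod, hsum⟩

/-- Ptolemy's theorem for a quadrilateral inscribed in a circle of unit diameter, three of whose
consecutive sides subtend the inscribed angles `x`, `y`, `z`. -/
theorem sin_add_mul_sin_add (x y z : ℝ) :
    sin (x + y) * sin (y + z) = sin x * sin z + sin y * sin (x + y + z) := by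
  simp only [sin_add, cos_add]
  linear_combination sin x * sin z * sin_sq_add_cos_sq y

theorem sin_sub_of_cos_eq_neg_one {a : ℝ} (ha : cos a = -1) (x : ℝ) : sin (a - x) = sin x := by
  have hsin : sin a = 0 := sin_eq_zero_iff_cos_eq.mpr (.inr ha)
  simp [sin_sub, hsin, ha]

theorem isHeptagonTriple_sin {θ : ℝ} (hθ : cos (7 * θ) = -1) :
    IsHeptagonTriple (sin θ) (sin (2 * θ)) (sin (3 * θ)) := by
  have sin_four : sin (4 * θ) = sin (3 * θ) := by
    rw [← sin_sub_of_cos_eq_neg_one hθ (3 * θ)]; ring_nf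
  have sin_five : sin (5 * θ) = sin (2 * θ) := by
    rw [← sin_sub_of_cos_eq_neg_one hθ (2 * θ)]; ring_nf
  constructor
  · calc
      sin (2 * θ) * sin (3 * θ) = sin (θ + θ) * sin (θ + 2 * θ) := by ring_nf
      _ = sin θ * sin (2 * θ) + sin θ * sin (θ + θ + 2 * θ) := sin_add_mul_sin_add _ _ _
      _ = sin θ * sin (2 * θ) + sin θ * sin (4 * θ) := by ring_nf
      _ = sin θ * sin (2 * θ) + sin θ * sin (3 * θ) := by rw [sin_four]
  · calc
      sin (3 * θ) ^ 2 = sin (3 * θ) * sin (4 * θ) := by rw [sin_four, sq]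
      _ = sin (θ + 2 * θ) * sin (2 * θ + 2 * θ) := by ring_nf
      _ = sin θ * sin (2 * θ) + sin (2 * θ) * sin (θ + 2 * θ + 2 * θ) := sin_add_mul_sin_add _ _ _
      _ = sin θ * sin (2 * θ) + sin (2 * θ) * sin (5 * θ) := by ring_nf
      _ = sin θ * sin (2 * θ) + sin (2 * θ) ^ 2 := by rw [sin_five, sq]

/-- De Casteljau's cubic for the heptagon: the signed diagonal ratios
`x₁ = t/d`, `x₂ = −u/t`, `x₃ = −d/u` of the regular heptagon (with
`u = sin(π/7)`, `d = sin(2π/7)`, `t = sin(3π/7)`) are roots of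
`X³ + X² − 2X − 1 = 0`, with product `1` and sum `−1`. -/
theorem heptagon_ratios_cubic (u d t x₁ x₂ x₃ : ℝ)
    (hu : u = sin (π / 7)) (hd : d = sin (2 * π / 7)) (ht : t = sin (3 * π / 7))
    (hx₁ : x₁ = t / d) (hx₂ : x₂ = -u / t) (hx₃ : x₃ = -d / u) :
    x₁ ^ 3 + x₁ ^ 2 - 2 * x₁ - 1 = 0 ∧
    x₂ ^ 3 + x₂ ^ 2 - 2 * x₂ - 1 = 0 ∧
    x₃ ^ 3 + x₃ ^ 2 - 2 * x₃ - 1 = 0 ∧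
    x₁ * x₂ * x₃ = 1 ∧
    x₁ + x₂ + x₃ = -1 := by
  have htriple : IsHeptagonTriple u d t := by
    have hcos : cos (7 * (π / 7)) = -1 := by rw [mul_div_cancel₀ π (by norm_num), cos_pi]
    simpa only [hu, hd, ht, mul_div_assoc] using isHeptagonTriple_sin hcos
  have hd_pos : 0 < d := hd ▸ sin_pos_of_pos_of_lt_pi (by positivity) (by linarith [pi_pos])
  exact heptagon_ratios_cubic_general htriple hd_pos.ne' hx₁ hx₂ hx₃
end

section
/- Let n ≥ 1 be a natural number and let M be the n×n real matrix with entries (0-indexed) M i j = 1 if i + j ≥ n − 1 and M i j = 0 otherwise. Then for every j with 0 ≤ j ≤ n−1, the ratio of the entries in the last row of M^k converges, as k → ∞, to the corresponding ratio of diagonals of the regular (2n+1)-gon: lim_{k→∞} (M^k)_{n−1, j} / (M^k)_{n−1, n−1} = sin((j+1)·π/(2n+1)) / sin(n·π/(2n+1)). -/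
open Real Filter

/-! Scale a primitive matrix `A` with positive right and left eigenvectors `u` and `v` to eigenvalue
`1`, and let `P` be the projection onto the line of `u` along the hyperplane `v ⬝ᵥ x = 0`. Some
power `A ^ m` dominates `c • P` entrywise for some `0 < c < 1`. Then `A ^ m - c • P` is nonnegative
with `u` as eigenvector for `1 - c`, so its powers decay geometrically; since `A` fixes `P` on both
sides, they differ from the powers of `A ^ m` by multiples of `P`, which forces `A ^ k → P`.

The golden matrix is symmetric and its square is positive. Its rows sum the last entries of a
vector, and summing sines in arithmetic progression shows that the diagonals form an eigenvector. -/

section Idempotent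

lemma pow_mul_eq_of_mul_eq {M : Type*} [Monoid M] {a p : M} (h : a * p = p) (k : ℕ) :
    a ^ k * p = p := by
  rw [← mul_left_iterate_apply]
  exact Function.iterate_fixed h k

lemma mul_pow_eq_of_mul_eq {M : Type*} [Monoid M] {a p : M} (h : p * a = p) (k : ℕ) :
    p * a ^ k = p := by
  rw [← mul_right_iterate_apply]
  exact Function.iterate_fixed h k

variable {R S : Type*} [CommRing R] [Ring S] [Algebra R S] {a p : S}

lemma sub_smul_pow_of_isIdempotentElem (hp : IsIdempotentElem p) (hap : a * p = p)
    (hpa : p * a = p) (c : R) (k : ℕ) :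
    (a - c • p) ^ k = a ^ k - (1 - (1 - c) ^ k) • p := by
  induction k with
  | zero => simp
  | succ k ih =>
    rw [pow_succ, ih, sub_mul, mul_sub, mul_sub, ← pow_succ, mul_smul_comm,
      pow_mul_eq_of_mul_eq hap, smul_mul_assoc, hpa, smul_mul_smul_comm, hp.eq]
    module

lemma pow_mod_mul_sub_smul_pow_div (hp : IsIdempotentElem p) (hap : a * p = p)
    (hpa : p * a = p) (c : R) (m k : ℕ) :
    a ^ (k % m) * (a ^ m - c • p) ^ (k / m) = a ^ k - (1 - (1 - c) ^ (k / m)) • p := by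
  rw [sub_smul_pow_of_isIdempotentElem hp (pow_mul_eq_of_mul_eq hap m)
    (mul_pow_eq_of_mul_eq hpa m), mul_sub, ← pow_mul, ← pow_add, Nat.mod_add_div,
    mul_smul_comm, pow_mul_eq_of_mul_eq hap]

end Idempotent

section PerronProjection

open Matrix

variable {ι K : Type*} [Fintype ι] [Field K] {A : Matrix ι ι K} {u v : ι → K}

/-- The projection onto the line spanned by `u` along the hyperplane `v ⬝ᵥ x = 0`, provided that
`v ⬝ᵥ u ≠ 0`. For right and left Perron eigenvectors `u` and `v` of a primitive matrix it is the
limit of the normalized powers. -/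
def perronProjection (u v : ι → K) : Matrix ι ι K :=
  (v ⬝ᵥ u)⁻¹ • vecMulVec u v

lemma perronProjection_mulVec_self (h : v ⬝ᵥ u ≠ 0) : perronProjection u v *ᵥ u = u := by
  rw [perronProjection, smul_mulVec, vecMulVec_mulVec, op_smul_eq_smul, smul_smul,
    inv_mul_cancel₀ h, one_smul]

lemma mul_perronProjection (hu : A *ᵥ u = u) :
    A * perronProjection u v = perronProjection u v := by
  rw [perronProjection, mul_smul_comm, mul_vecMulVec, hu]

lemma perronProjection_mul (hv : v ᵥ* A = v) :
    perronProjection u v * A = perronProjection u v := by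
  rw [perronProjection, smul_mul_assoc, vecMulVec_mul, hv]

lemma isIdempotentElem_perronProjection (h : v ⬝ᵥ u ≠ 0) :
    IsIdempotentElem (perronProjection u v) :=
  mul_perronProjection (perronProjection_mulVec_self h)

lemma perronProjection_apply_div_apply {i : ι} (h : v ⬝ᵥ u ≠ 0) (hi : u i ≠ 0) (j l : ι) :
    perronProjection u v i j / perronProjection u v i l = v j / v l := by
  simp only [perronProjection, Matrix.smul_apply, vecMulVec_apply, smul_eq_mul]
  rw [mul_div_mul_left _ _ (inv_ne_zero h), mul_div_mul_left _ _ hi]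

end PerronProjection

section Nonnegative

open Matrix

lemma pow_mulVec_eq_smul {ι R : Type*} [Fintype ι] [DecidableEq ι] [CommSemiring R]
    {A : Matrix ι ι R} {u : ι → R} {c : R} (h : A *ᵥ u = c • u) (k : ℕ) :
    (A ^ k) *ᵥ u = c ^ k • u := by
  induction k with
  | zero => simp
  | succ k ih => rw [pow_succ, ← mulVec_mulVec, h, mulVec_smul, ih, smul_smul, pow_succ']

lemma pow_mulVec_eq_self {ι R : Type*} [Fintype ι] [DecidableEq ι] [CommSemiring R]
    {A : Matrix ι ι R} {u : ι → R} (h : A *ᵥ u = u) (k : ℕ) : (A ^ k) *ᵥ u = u := by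
  rw [pow_mulVec_eq_smul (h.trans (one_smul R u).symm), one_pow, one_smul]

lemma mul_apply_nonneg {l m n R : Type*} [Fintype m] [Semiring R] [PartialOrder R]
    [IsOrderedRing R] {A : Matrix l m R} {B : Matrix m n R} (hA : ∀ i j, 0 ≤ A i j)
    (hB : ∀ i j, 0 ≤ B i j) (i : l) (j : n) : 0 ≤ (A * B) i j :=
  Finset.sum_nonneg fun k _ => mul_nonneg (hA i k) (hB k j)

lemma apply_le_of_mulVec_eq_smul {ι K : Type*} [Fintype ι] [Field K] [LinearOrder K]
    [IsStrictOrderedRing K] {A : Matrix ι ι K} {u : ι → K} {c : K} (hA : ∀ i j, 0 ≤ A i j)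
    (hu : ∀ i, 0 < u i) (h : A *ᵥ u = c • u) (i j : ι) :
    A i j ≤ c * (u i / u j) := by
  rw [← mul_div_assoc, le_div_iff₀ (hu j)]
  calc A i j * u j ≤ ∑ l, A i l * u l :=
        Finset.single_le_sum (f := fun l => A i l * u l)
          (fun l _ => mul_nonneg (hA i l) (hu l).le) (Finset.mem_univ j)
    _ = c * u i := congrFun h i

lemma dotProduct_pos_of_pos {ι R : Type*} [Fintype ι] [Nonempty ι] [Semiring R] [PartialOrder R]
    [IsStrictOrderedRing R] {u v : ι → R} (hu : ∀ i, 0 < u i) (hv : ∀ i, 0 < v i) : 0 < u ⬝ᵥ v :=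
  Finset.sum_pos (fun i _ => mul_pos (hu i) (hv i)) Finset.univ_nonempty

end Nonnegative

lemma exists_mem_Ioo_forall_mul_le {α : Type*} [Finite α] {f : α → ℝ} (hf : ∀ a, 0 < f a)
    (g : α → ℝ) : ∃ c ∈ Set.Ioo (0 : ℝ) 1, ∀ a, c * g a ≤ f a := by
  have hsmall : ∀ᶠ c in nhdsWithin (0 : ℝ) (Set.Ioi 0), ∀ a, c * g a ≤ f a := by
    refine eventually_all.2 fun a => nhdsWithin_le_nhds ?_
    have hlim : Tendsto (fun c : ℝ => c * g a) (nhds 0) (nhds 0) := by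
      simpa only [zero_mul] using (continuous_mul_const (g a)).tendsto 0
    exact hlim.eventually_le_const (hf a)
  exact (Eventually.and (Ioo_mem_nhdsGT one_pos) hsmall).exists

lemma tendsto_pow_div_atTop_nhds_zero {r : ℝ} (hr0 : 0 ≤ r) (hr1 : r < 1) {m : ℕ} (hm : m ≠ 0) :
    Tendsto (fun k : ℕ => r ^ (k / m)) atTop (nhds 0) :=
  (tendsto_pow_atTop_nhds_zero_of_lt_one hr0 hr1).comp (Nat.tendsto_div_const_atTop hm)

section PrimitiveMatrix

open Matrix

variable {ι : Type*} [Fintype ι] [DecidableEq ι] {A : Matrix ι ι ℝ} {u v : ι → ℝ}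

lemma exists_pow_sub_smul_nonneg (hA : A.IsPrimitive) (P : Matrix ι ι ℝ) :
    ∃ m ≠ 0, ∃ c ∈ Set.Ioo (0 : ℝ) 1, ∀ i j, 0 ≤ (A ^ m - c • P) i j := by
  obtain ⟨m, hm, hpos⟩ := hA.exists_pos_pow
  obtain ⟨c, hc, hle⟩ := exists_mem_Ioo_forall_mul_le
    (f := fun ij : ι × ι => (A ^ m) ij.1 ij.2) (fun ij => hpos ij.1 ij.2) fun ij => P ij.1 ij.2
  exact ⟨m, hm.ne', c, hc, fun i j => sub_nonneg.2 (hle (i, j))⟩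

lemma tendsto_pow_mod_mul_pow_div_apply_nhds_zero {B : Matrix ι ι ℝ} (hA : ∀ i j, 0 ≤ A i j)
    (hB : ∀ i j, 0 ≤ B i j) (hu : ∀ i, 0 < u i) (hAu : A *ᵥ u = u) {r : ℝ} (hBu : B *ᵥ u = r • u)
    (hr0 : 0 ≤ r) (hr1 : r < 1) {m : ℕ} (hm : m ≠ 0) (i j : ι) :
    Tendsto (fun k : ℕ => (A ^ (k % m) * B ^ (k / m)) i j) atTop (nhds 0) := by
  have hnonneg (k : ℕ) : ∀ i j, 0 ≤ (A ^ (k % m) * B ^ (k / m)) i j :=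
    mul_apply_nonneg (pow_apply_nonneg hA _) (pow_apply_nonneg hB _)
  have heigen (k : ℕ) : (A ^ (k % m) * B ^ (k / m)) *ᵥ u = r ^ (k / m) • u := by
    rw [← mulVec_mulVec, pow_mulVec_eq_smul hBu, mulVec_smul, pow_mulVec_eq_self hAu]
  have hle (k : ℕ) : (A ^ (k % m) * B ^ (k / m)) i j ≤ r ^ (k / m) * (u i / u j) :=
    apply_le_of_mulVec_eq_smul (hnonneg k) hu (heigen k) i j
  refine squeeze_zero (hnonneg · i j) hle ?_
  simpa only [zero_mul] using
    (tendsto_pow_div_atTop_nhds_zero hr0 hr1 hm).mul_const (u i / u j)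

lemma tendsto_pow_perronProjection (hA : A.IsPrimitive) (hu : ∀ i, 0 < u i) (hv : ∀ i, 0 < v i)
    (hAu : A *ᵥ u = u) (hvA : v ᵥ* A = v) :
    Tendsto (fun k : ℕ => A ^ k) atTop (nhds (perronProjection u v)) := by
  refine tendsto_pi_nhds.2 fun i => tendsto_pi_nhds.2 fun j => ?_
  have : Nonempty ι := ⟨i⟩
  have hvu : v ⬝ᵥ u ≠ 0 := (dotProduct_pos_of_pos hv hu).ne'
  set P := perronProjection u v
  obtain ⟨m, hm, c, ⟨hc0, hc1⟩, hN⟩ := exists_pow_sub_smul_nonneg hA P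
  set N := A ^ m - c • P
  have hr0 : 0 ≤ 1 - c := sub_nonneg.2 hc1.le
  have hr1 : 1 - c < 1 := sub_lt_self 1 hc0
  have hNu : N *ᵥ u = (1 - c) • u := by
    rw [sub_mulVec, smul_mulVec, pow_mulVec_eq_self hAu, perronProjection_mulVec_self hvu,
      sub_smul, one_smul]
  have hremainder : Tendsto (fun k : ℕ => (A ^ (k % m) * N ^ (k / m)) i j) atTop (nhds 0) :=
    tendsto_pow_mod_mul_pow_div_apply_nhds_zero hA.nonneg hN hu hAu hNu hr0 hr1 hm i j
  have hmain : Tendsto (fun k : ℕ => (1 - (1 - c) ^ (k / m)) * P i j) atTop (nhds (P i j)) := by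
    simpa only [sub_zero, one_mul] using
      ((tendsto_pow_div_atTop_nhds_zero hr0 hr1 hm).const_sub 1).mul_const (P i j)
  have hdecomp (k : ℕ) :
      (A ^ (k % m) * N ^ (k / m)) i j + (1 - (1 - c) ^ (k / m)) * P i j = (A ^ k) i j := by
    rw [pow_mod_mul_sub_smul_pow_div (isIdempotentElem_perronProjection hvu)
      (mul_perronProjection hAu) (perronProjection_mul hvA)]
    exact sub_add_cancel _ _
  simpa only [zero_add, hdecomp] using hremainder.add hmain

lemma isPrimitive_smul {c : ℝ} (hc : 0 < c) (hA : A.IsPrimitive) : (c • A).IsPrimitive := by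
  obtain ⟨m, hm, hpos⟩ := hA.exists_pos_pow
  refine ⟨fun i j => mul_nonneg hc.le (hA.nonneg i j), m, hm, fun i j => ?_⟩
  rw [smul_pow]
  exact mul_pos (pow_pos hc m) (hpos i j)

lemma tendsto_smul_pow_perronProjection {r : ℝ} (hA : A.IsPrimitive) (hr : 0 < r)
    (hu : ∀ i, 0 < u i) (hv : ∀ i, 0 < v i) (hAu : A *ᵥ u = r • u) (hvA : v ᵥ* A = r • v) :
    Tendsto (fun k : ℕ => (r⁻¹ • A) ^ k) atTop (nhds (perronProjection u v)) := by
  refine tendsto_pow_perronProjection (isPrimitive_smul (inv_pos.2 hr) hA) hu hv ?_ ?_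
  · rw [smul_mulVec, hAu, inv_smul_smul₀ hr.ne']
  · rw [vecMul_smul, hvA, inv_smul_smul₀ hr.ne']

lemma tendsto_pow_apply_div_pow_apply {r : ℝ} (hA : A.IsPrimitive) (hr : 0 < r)
    (hu : ∀ i, 0 < u i) (hv : ∀ i, 0 < v i) (hAu : A *ᵥ u = r • u) (hvA : v ᵥ* A = r • v)
    (i j l : ι) :
    Tendsto (fun k : ℕ => (A ^ k) i j / (A ^ k) i l) atTop (nhds (v j / v l)) := by
  have : Nonempty ι := ⟨i⟩
  have hvu : 0 < v ⬝ᵥ u := dotProduct_pos_of_pos hv hu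
  have hP : perronProjection u v i l ≠ 0 :=
    (mul_pos (inv_pos.2 hvu) (mul_pos (hu i) (hv l))).ne'
  have hentry (j : ι) : Tendsto (fun k : ℕ => ((r⁻¹ • A) ^ k) i j) atTop
      (nhds (perronProjection u v i j)) :=
    ((tendsto_smul_pow_perronProjection hA hr hu hv hAu hvA).apply_nhds i).apply_nhds j
  have hratio := (hentry j).div (hentry l) hP
  rw [perronProjection_apply_div_apply hvu.ne' (hu i).ne'] at hratio
  refine hratio.congr fun k => ?_
  simp only [smul_pow, Matrix.smul_apply, smul_eq_mul]
  exact mul_div_mul_left _ _ (pow_ne_zero k (inv_ne_zero hr.ne'))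

end PrimitiveMatrix

section GoldenMatrix

open Matrix

/-- De Casteljau's golden matrix: zeros above the antidiagonal, ones on and below it. The condition
`i + j ≥ n - 1` is written without truncated subtraction. -/
def goldenMatrix (n : ℕ) : Matrix (Fin n) (Fin n) ℝ :=
  of fun i j => if n ≤ (i : ℕ) + j + 1 then 1 else 0

/-- The diagonals `d₁, …, dₙ` of a regular `(2n+1)`-gon, up to a common factor; the entry at `j` is
`d_{j+1}`, since `Fin n` counts from `0`. -/
noncomputable def diagonalLength (n : ℕ) : Fin n → ℝ :=
  fun j => sin (((j : ℕ) + 1) * π / (2 * n + 1))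

/-- The Perron eigenvalue of the golden matrix. For `n ≥ 1` it equals `dₙ / d₁`, the ratio of the
longest diagonal of the regular `(2n+1)`-gon to its side. -/
noncomputable def goldenEigenvalue (n : ℕ) : ℝ :=
  (2 * sin (π / (2 * n + 1) / 2))⁻¹

variable {n : ℕ}

lemma isSymm_goldenMatrix (n : ℕ) : (goldenMatrix n).IsSymm := by
  ext i j
  simp only [goldenMatrix, transpose_apply, of_apply, add_comm (j : ℕ)]

lemma goldenMatrix_nonneg (i j : Fin n) : 0 ≤ goldenMatrix n i j := by
  simp only [goldenMatrix, of_apply]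
  positivity

lemma goldenMatrix_last_apply (h : n - 1 < n) (j : Fin n) : goldenMatrix n ⟨n - 1, h⟩ j = 1 :=
  if_pos (by dsimp only; omega)

lemma goldenMatrix_sq_pos (i j : Fin n) : 0 < (goldenMatrix n ^ 2) i j := by
  have hlast : n - 1 < n := by have := i.isLt; omega
  rw [sq, mul_apply]
  refine Finset.sum_pos' (fun l _ => mul_nonneg (goldenMatrix_nonneg i l) (goldenMatrix_nonneg l j))
    ⟨⟨n - 1, hlast⟩, Finset.mem_univ _, ?_⟩
  rw [← (isSymm_goldenMatrix n).apply i, goldenMatrix_last_apply, goldenMatrix_last_apply, one_mul]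
  exact one_pos

lemma isPrimitive_goldenMatrix (n : ℕ) : (goldenMatrix n).IsPrimitive :=
  ⟨goldenMatrix_nonneg, 2, two_pos, goldenMatrix_sq_pos⟩

lemma goldenMatrix_mulVec_apply (x : ℕ → ℝ) (j : Fin n) :
    (goldenMatrix n *ᵥ fun l => x l) j = ∑ l ∈ Finset.Ico (n - 1 - j) n, x l := by
  have hfilter : (Finset.range n).filter (fun l => n ≤ j + l + 1) = Finset.Ico (n - 1 - j) n := by
    ext l
    simp only [Finset.mem_filter, Finset.mem_range, Finset.mem_Ico]
    omega
  rw [← hfilter, Finset.sum_filter,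
    ← Fin.sum_univ_eq_sum_range (fun l => if n ≤ j + l + 1 then x l else 0)]
  simp only [mulVec, dotProduct, goldenMatrix, of_apply, ite_mul, one_mul, zero_mul]

lemma two_mul_sin_half_mul_sum_Ico_sin (t : ℝ) {a b : ℕ} (hab : a ≤ b) :
    2 * sin (t / 2) * ∑ l ∈ Finset.Ico a b, sin ((l + 1) * t) =
      cos ((a + 1 / 2) * t) - cos ((b + 1 / 2) * t) := by
  have htelescope (l : ℕ) : 2 * sin (t / 2) * sin ((l + 1) * t) =
      -cos (((l + 1 : ℕ) + 1 / 2) * t) - -cos ((l + 1 / 2) * t) := by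
    rw [two_mul_sin_mul_sin, ← cos_neg (t / 2 - _)]
    push_cast
    ring_nf
  rw [Finset.mul_sum, Finset.sum_congr rfl fun l _ => htelescope l,
    Finset.sum_Ico_sub (fun l : ℕ => -cos ((l + 1 / 2) * t)) hab]
  ring

lemma diagonalLength_pos (j : Fin n) : 0 < diagonalLength n j := by
  have hj : (j : ℝ) + 1 ≤ n := by exact_mod_cast j.isLt
  refine sin_pos_of_pos_of_lt_pi (by positivity) ?_
  rw [div_lt_iff₀ (by positivity), mul_comm π]
  exact mul_lt_mul_of_pos_right (by linarith) pi_pos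

lemma goldenEigenvalue_pos (n : ℕ) : 0 < goldenEigenvalue n := by
  have hle : π / (2 * n + 1) ≤ π := div_le_self pi_pos.le (le_add_of_nonneg_left (by positivity))
  have hsin : 0 < sin (π / (2 * n + 1) / 2) :=
    sin_pos_of_pos_of_lt_pi (by positivity) ((half_lt_self (by positivity)).trans_le hle)
  exact inv_pos.2 (mul_pos two_pos hsin)

lemma goldenMatrix_mulVec_diagonalLength (n : ℕ) :
    goldenMatrix n *ᵥ diagonalLength n = goldenEigenvalue n • diagonalLength n := by
  set t : ℝ := π / (2 * n + 1) with ht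
  have hdiag : diagonalLength n = fun j : Fin n => sin (((j : ℕ) + 1) * t) := by
    ext j
    rw [diagonalLength, ht, mul_div_assoc]
  have hangle : ((n : ℝ) + 1 / 2) * t = π / 2 := by rw [ht]; field_simp
  ext j
  have hcast : ((n - 1 - j : ℕ) : ℝ) + 1 / 2 = n + 1 / 2 - (j + 1) := by
    rw [Nat.sub_sub, Nat.cast_sub (by omega)]
    push_cast
    ring
  have hsum := two_mul_sin_half_mul_sum_Ico_sin t (show n - 1 - (j : ℕ) ≤ n by omega)
  rw [hangle, hcast, sub_mul, hangle, cos_pi_div_two_sub, cos_pi_div_two, sub_zero] at hsum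
  rw [hdiag, goldenMatrix_mulVec_apply (fun l => sin ((l + 1) * t)), Pi.smul_apply, smul_eq_mul,
    ← hsum]
  exact (inv_mul_cancel_left₀ (inv_pos.1 (goldenEigenvalue_pos n)).ne' _).symm

lemma tendsto_goldenMatrix_pow_apply_div_pow_apply (i j l : Fin n) :
    Tendsto (fun k : ℕ => (goldenMatrix n ^ k) i j / (goldenMatrix n ^ k) i l) atTop
      (nhds (diagonalLength n j / diagonalLength n l)) := by
  have hright := goldenMatrix_mulVec_diagonalLength n
  have hleft := hright
  rw [← vecMul_transpose, (isSymm_goldenMatrix n).eq] at hleft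
  exact tendsto_pow_apply_div_pow_apply (isPrimitive_goldenMatrix n)
    (goldenEigenvalue_pos n) diagonalLength_pos diagonalLength_pos hright hleft i j l

end GoldenMatrix

/-- De Casteljau's golden matrix theorem: for the `n×n` 0-1 matrix `M` with
`M i j = 1` iff `i + j ≥ n − 1`, the ratios of the entries in the last row of `M^k`
converge, as `k → ∞`, to the corresponding ratios of the diagonal lengths
`sin((j+1)π/(2n+1))` of the regular `(2n+1)`-gon. -/
theorem golden_matrix_power_ratios (n : ℕ) (hn : 1 ≤ n)
    (M : Matrix (Fin n) (Fin n) ℝ)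
    (hM : ∀ i j : Fin n, M i j = if (i : ℕ) + (j : ℕ) ≥ n - 1 then 1 else 0) :
    ∀ j : Fin n,
      Tendsto (fun k : ℕ =>
          (M ^ k) (⟨n - 1, by omega⟩ : Fin n) j /
          (M ^ k) (⟨n - 1, by omega⟩ : Fin n) (⟨n - 1, by omega⟩ : Fin n))
        atTop
        (nhds (sin (((j : ℕ) + 1) * π / (2 * n + 1)) / sin (n * π / (2 * n + 1)))) := by
  intro j
  obtain rfl : M = goldenMatrix n := by
    ext i j
    rw [hM]
    exact if_congr (by omega) rfl rfl
  have hlast : diagonalLength n ⟨n - 1, by omega⟩ = sin (n * π / (2 * n + 1)) := by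
    rw [diagonalLength, Nat.cast_pred hn, sub_add_cancel]
  rw [← hlast]
  exact tendsto_goldenMatrix_pow_apply_div_pow_apply _ j _
end
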